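/- arXiv:1909.13100 — 2 statements merged into one kernel-verified Lean document; each statement's English description precedes it below -/
import Mathlib

section
/- If Γ is infinite, then {((x_α)_{α∈Γ}, (y_α)_{α∈Γ}) ∈ 𝒳 × 𝒳 : the set {β ∈ Γ : x_β ≠ y_β} is finite} ⊆ P(ℋ, 𝒳); that is, any two points of X^Γ differing at only finitely many coordinates are proximal under the group of generalized shift homeomorphisms. -/
/-!
Since `X` is finite and `Γ` is infinite, some value `a` is taken by `x` at infinitely many
coordinates outside the finite set where `x` and `y` differ; call this set of coordinates `A`,
so `x = y = a` on `A`. The permutations of `Γ` act highly transitively, so every finite `F ⊆ Γ`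
is mapped into `A` by some permutation `φ_F`, and then `x ∘ φ_F = y ∘ φ_F = a` on `F`.
Along the net of finite sets `F`, both `x ∘ φ_F` and `y ∘ φ_F` converge pointwise to the constant
point `a`, which gives proximality without an appeal to compactness.
-/

open Set Topology

/-- The proximal relation of a semigroup `S` of self-maps of a space `Z`:
`(x, y)` is proximal iff the closure of `{(s x, s y) : s ∈ S}` meets the diagonal. -/
def proxRel {Z : Type*} [TopologicalSpace Z] (S : Set (Z → Z)) : Set (Z × Z) :=
  {p | ∃ z : Z, (z, z) ∈ closure {q : Z × Z | ∃ s ∈ S, q = (s p.1, s p.2)}}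

/-- The regionally proximal relation of a semigroup `S` of self-maps of a space `Z`:
`(x, y)` is regionally proximal iff there are nets `x_λ → x`, `y_λ → y` and `s_λ` in `S`
with `lim s_λ x_λ = lim s_λ y_λ`; equivalently, there is `z` such that `((x, y), (z, z))`
lies in the closure of `{((a, b), (s a, s b)) : s ∈ S, a b ∈ Z}`. -/
def regProxRel {Z : Type*} [TopologicalSpace Z] (S : Set (Z → Z)) : Set (Z × Z) :=
  {p | ∃ z : Z, (p, (z, z)) ∈
    closure {q : (Z × Z) × Z × Z | ∃ s ∈ S, ∃ a b : Z, q = ((a, b), (s a, s b))}}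

/-- The syndetically proximal relation of a group `T` of homeomorphisms of `Z`:
`(x, y)` is syndetically proximal iff the closure of the orbit `{(t x, t y) : t ∈ T}`
is contained in the proximal relation. -/
def synProxRel {Z : Type*} [TopologicalSpace Z] (T : Set (Z → Z)) : Set (Z × Z) :=
  {p | closure {q : Z × Z | ∃ t ∈ T, q = (t p.1, t p.2)} ⊆ proxRel T}

/-- `𝒮`: the semigroup of all generalized shifts `σ_φ (x) = x ∘ φ` on `X ^ Γ`. -/
def shiftSemigroup (X Γ : Type*) : Set ((Γ → X) → (Γ → X)) :=
  {f | ∃ φ : Γ → Γ, f = fun x => x ∘ φ}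

/-- `ℋ`: the group of generalized shift homeomorphisms `σ_φ` with `φ` bijective. -/
def shiftGroup (X Γ : Type*) : Set ((Γ → X) → (Γ → X)) :=
  {f | ∃ φ : Γ → Γ, Function.Bijective φ ∧ f = fun x => x ∘ φ}

/-- Any finite set is carried into any given infinite set by a permutation of the whole type. -/
lemma exists_perm_forall_mem {Γ : Type*} {A : Set Γ} (hA : A.Infinite) (F : Finset Γ) :
    ∃ φ : Equiv.Perm Γ, ∀ i ∈ F, φ i ∈ A := by
  have := hA.to_subtype
  let f : Fin F.card ↪ Γ := F.equivFin.symm.toEmbedding.trans (Function.Embedding.subtype _)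
  let g : Fin F.card ↪ Γ :=
    (Fin.valEmbedding.trans (Infinite.natEmbedding A)).trans (Function.Embedding.subtype _)
  obtain ⟨φ, hφ⟩ :=
    (Equiv.Perm.isMultiplyPretransitive Γ F.card).exists_smul_eq f g
  refine ⟨φ, fun i hi => ?_⟩
  have h := DFunLike.congr_fun hφ (F.equivFin ⟨i, hi⟩)
  have hf : f (F.equivFin ⟨i, hi⟩) = i := by simp [f]
  rw [Function.Embedding.smul_apply, hf, Equiv.Perm.smul_def] at h
  rw [h]
  exact Subtype.property _

/-- for infinite `Γ`, pairs differing at only finitely many coordinates are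
proximal for `(ℋ, 𝒳)`. -/
theorem finite_diff_subset_proxRel_shiftGroup (X Γ : Type*) [TopologicalSpace X]
    [DiscreteTopology X] [Finite X] [Nontrivial X] [Infinite Γ] :
    {p : (Γ → X) × (Γ → X) | {β : Γ | p.1 β ≠ p.2 β}.Finite} ⊆
      proxRel (shiftGroup X Γ) := by
  rintro ⟨x, y⟩ hD
  have hE : {β : Γ | x β ≠ y β}ᶜ.Infinite := Set.Finite.infinite_compl hD
  have := hE.to_subtype
  obtain ⟨a, ha⟩ := Finite.exists_infinite_fiber fun β : ({β : Γ | x β ≠ y β}ᶜ : Set Γ) => x β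
  have hA : {β | x β = y β ∧ x β = a}.Infinite :=
    ((Set.infinite_coe_iff.1 ha).image Subtype.val_injective.injOn).mono <| by
      rintro _ ⟨⟨β, hβ⟩, hβa, rfl⟩
      exact ⟨not_not.1 hβ, hβa⟩
  choose φ hφ using exists_perm_forall_mem hA
  have key : ∀ w : Γ → X, (∀ F, ∀ i ∈ F, w (φ F i) = a) →
      Filter.Tendsto (fun F => w ∘ φ F) Filter.atTop (𝓝 fun _ => a) := fun w hw =>
    tendsto_pi_nhds.2 fun i => tendsto_const_nhds.congr' <| by
      filter_upwards [Filter.eventually_ge_atTop {i}] with F hF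
      exact (hw F i (hF (Finset.mem_singleton_self i))).symm
  refine ⟨fun _ => a, mem_closure_of_tendsto
    ((key x fun F i hi => ?_).prodMk_nhds (key y fun F i hi => ?_))
    (Filter.Eventually.of_forall fun F => ⟨_, ⟨φ F, (φ F).bijective, rfl⟩, rfl⟩)⟩
  all_goals
    have h := hφ F i hi
    simp only [Set.mem_ofPred_eq] at h
    grind
end

section
/- For any nonempty set Γ, the collection {((x_α)_{α∈Γ}, (y_α)_{α∈Γ}) ∈ 𝒳 × 𝒳 : max(card({β ∈ Γ : x_β ≠ y_β}), ℵ₀) ≤ card({β ∈ Γ : x_β = y_β})} is a subset of P(ℋ, 𝒳); that is, if the agreement set of a pair is infinite and its cardinality is at least that of the disagreement set, the pair is proximal under the group of generalized shift homeomorphisms. -/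
/-!
Let `A` be the agreement set of `(x, y)`. Only the infiniteness of `A` is needed. As `X` is finite,
the pigeonhole principle gives `c : X` such that `B = {β | x β = c ∧ y β = c}` is infinite. Every
finite `F ⊆ Γ` is carried into `B` by some permutation `φ_F` of `Γ`, because the symmetric group
is `n`-transitive for all `n`. Then `x ∘ φ_F` and `y ∘ φ_F` both equal `c` on `F`, so along the
directed set of finite subsets both nets converge pointwise to the constant function `c`.
-/

open Set Topology

/-- A finite set can be moved into any infinite set by a permutation of the ambient type. -/
theorem exists_perm_mapsTo_of_infinite {Γ : Type*} {B : Set Γ} (hB : B.Infinite) (F : Finset Γ) :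
    ∃ φ : Equiv.Perm Γ, ∀ a ∈ F, φ a ∈ B := by
  obtain ⟨G, hGB, hG⟩ := hB.exists_subset_card_eq F.card
  let f : Fin F.card ↪ Γ := F.equivFin.symm.toEmbedding.trans (Function.Embedding.subtype _)
  let g : Fin F.card ↪ Γ :=
    (G.equivFinOfCardEq hG).symm.toEmbedding.trans (Function.Embedding.subtype _)
  have := Equiv.Perm.isMultiplyPretransitive Γ F.card
  obtain ⟨φ, hφ⟩ := MulAction.exists_smul_eq (Equiv.Perm Γ) f g
  refine ⟨φ, fun a ha => ?_⟩
  have h := DFunLike.congr_fun hφ (F.equivFin ⟨a, ha⟩)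
  have hf : f (F.equivFin ⟨a, ha⟩) = a := by simp [f]
  rw [Function.Embedding.smul_apply, hf, Equiv.Perm.smul_def] at h
  rw [h]
  exact hGB ((G.equivFinOfCardEq hG).symm _).2

/-- pairs whose agreement set is infinite with cardinality at least that of the
disagreement set are proximal for `(ℋ, 𝒳)`. -/
theorem max_card_le_subset_proxRel_shiftGroup (X Γ : Type*) [TopologicalSpace X]
    [DiscreteTopology X] [Finite X] [Nontrivial X] [Nonempty Γ] :
    {p : (Γ → X) × (Γ → X) |
        max (Cardinal.mk {β : Γ | p.1 β ≠ p.2 β}) Cardinal.aleph0 ≤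
          Cardinal.mk {β : Γ | p.1 β = p.2 β}} ⊆
      proxRel (shiftGroup X Γ) := by
  rintro ⟨x, y⟩ h
  have hA : {β : Γ | x β = y β}.Infinite :=
    Set.infinite_coe_iff.1 (Cardinal.infinite_iff.2 ((le_max_right _ _).trans h))
  obtain ⟨c, hB⟩ : ∃ c, {β : Γ | x β = c ∧ y β = c}.Infinite := by
    by_contra! hfin
    refine hA ((Set.finite_iUnion hfin).subset fun β hβ => ?_)
    exact Set.mem_iUnion.2 ⟨x β, rfl, hβ.symm⟩
  choose φ hφ using exists_perm_mapsTo_of_infinite hB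
  refine ⟨fun _ => c, mem_closure_of_tendsto (b := Filter.atTop)
    (f := fun F : Finset Γ => (x ∘ φ F, y ∘ φ F)) (Filter.Tendsto.prodMk_nhds ?_ ?_)
    (.of_forall fun F => ⟨_, ⟨φ F, (φ F).bijective, rfl⟩, rfl⟩)⟩
  all_goals
    refine tendsto_pi_nhds.2 fun a => tendsto_const_nhds.congr' ?_
    filter_upwards [Filter.eventually_ge_atTop {a}] with F hF
    have := hφ F a (hF (Finset.mem_singleton_self a))
  · exact this.1.symm
  · exact this.2.symm
end
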